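/- Let K be an algebraically closed field and n, m positive integers. Let φ: Mat_{n,n}^m → Mat_{n,n}^{m+1} be given by (X_1,...,X_m) ↦ (I, X_1,...,X_m), and let φ*: K[Mat_{n,n}^{m+1}] → K[Mat_{n,n}^m] be the induced map on coordinate rings, φ*(f)(X_1,...,X_m) = f(I, X_1,...,X_m). Then φ* restricts to a surjective ring homomorphism from R(n,m+1) = K[Mat_{n,n}^{m+1}]^{SL_n × SL_n} onto S(n,m) = K[Mat_{n,n}^m]^{GL_n}. -/

import Mathlib

open MvPolynomial Matrix

/-- Coordinate functions of an `m`-tuple of `n × n` matrices. -/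
def matCoords {K : Type} [Field K] {n m : ℕ} (X : Fin m → Matrix (Fin n) (Fin n) K) :
    Fin m × Fin n × Fin n → K :=
  fun p => X p.1 p.2.1 p.2.2

/-- The ring of matrix semi-invariants `R(n,m) = K[Mat_{n,n}^m]^{SL_n × SL_n}`, where
`(A,B)` acts by `(X_1, …, X_m) ↦ (A X_1 B⁻¹, …, A X_m B⁻¹)`. -/
noncomputable def matrixSemiInvariants (K : Type) [Field K] (n m : ℕ) :
    Subalgebra K (MvPolynomial (Fin m × Fin n × Fin n) K) :=
  ⨅ (A : SpecialLinearGroup (Fin n) K) (B : SpecialLinearGroup (Fin n) K)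
    (X : Fin m → Matrix (Fin n) (Fin n) K),
      AlgHom.equalizer
        (aeval (matCoords fun i => A.val * X i * (B⁻¹).val))
        (aeval (matCoords X))

/-- The ring of matrix invariants `S(n,m) = K[Mat_{n,n}^m]^{GL_n}`, where `A` acts by
simultaneous conjugation. -/
noncomputable def matrixInvariants (K : Type) [Field K] (n m : ℕ) :
    Subalgebra K (MvPolynomial (Fin m × Fin n × Fin n) K) :=
  ⨅ (A : GeneralLinearGroup (Fin n) K) (X : Fin m → Matrix (Fin n) (Fin n) K),
      AlgHom.equalizer
        (aeval (matCoords fun i => A.val * X i * (A⁻¹).val))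
        (aeval (matCoords X))

/-- The map `φ* : K[Mat_{n,n}^{m+1}] → K[Mat_{n,n}^m]` induced by
`φ : (X_1, …, X_m) ↦ (I, X_1, …, X_m)`. -/
noncomputable def phiStar (K : Type) [Field K] (n m : ℕ) :
    MvPolynomial (Fin (m + 1) × Fin n × Fin n) K →ₐ[K]
      MvPolynomial (Fin m × Fin n × Fin n) K :=
  aeval fun p =>
    Fin.cases (C ((1 : Matrix (Fin n) (Fin n) K) p.2.1 p.2.2))
      (fun i => X (i, p.2.1, p.2.2)) p.1

/-!
Conjugation by a matrix whose determinant is an `n`-th power is, up to a scalar, conjugation by an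
element of `SL_n`. Over an infinite field every invertible `A` lies on a polynomial curve of
matrices with determinant `t`, and agreement at all `t = s ^ n` forces agreement everywhere on the
curve; hence `R(n, m) ⊆ S(n, m)`. Since simultaneous conjugation fixes `I`, restricting a
conjugation invariant to `X_0 = I` gives a conjugation invariant. Conversely
`g(adj(X_0) X_1, …, adj(X_0) X_m)` restricts to `g`, and `(A, B)` turns `adj(X_0) X_i` into
`B adj(X_0) X_i B⁻¹`, so it is a semi-invariant when `g` is a conjugation invariant.
-/

section PolynomialCurves

theorem polynomial_eq_of_forall_eval_pow_eq {R : Type*} [CommRing R] [IsDomain R] [Infinite R]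
    {n : ℕ} (hn : 0 < n) {p q : Polynomial R}
    (h : ∀ s : R, s ≠ 0 → p.eval (s ^ n) = q.eval (s ^ n)) : p = q := by
  refine Polynomial.expand_injective hn (Polynomial.eq_of_infinite_eval_eq _ _ ?_)
  refine (Set.finite_singleton (0 : R)).infinite_compl.mono fun s hs => ?_
  simpa only [Set.mem_ofPred_eq, Polynomial.expand_eval] using h s hs

theorem mapMatrix_evalRingHom_mapMatrix_C {ι R : Type*} [Fintype ι] [DecidableEq ι]
    [CommSemiring R] (t : R) (A : Matrix ι ι R) :
    (Polynomial.evalRingHom t).mapMatrix (Polynomial.C.mapMatrix A) = A := by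
  ext i j
  simp

theorem exists_polynomial_matrix_det_eq_X {ι K : Type*} [Fintype ι] [DecidableEq ι] [Nonempty ι]
    [Field K] {A : Matrix ι ι K} (hA : A.det ≠ 0) :
    ∃ M : Matrix ι ι (Polynomial K),
      M.det = Polynomial.X ∧ (Polynomial.evalRingHom A.det).mapMatrix M = A := by
  obtain ⟨k⟩ := ‹Nonempty ι›
  refine ⟨Polynomial.C.mapMatrix A * diagonal (Function.update 1 k
    (Polynomial.C A.det⁻¹ * Polynomial.X)), ?_, ?_⟩
  · rw [det_mul, ← RingHom.map_det, det_diagonal, Finset.prod_update_of_mem (Finset.mem_univ k)]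
    simp [← mul_assoc, ← Polynomial.C_mul, hA]
  · have eval_diagonal : (Polynomial.evalRingHom A.det).mapMatrix (diagonal (Function.update 1 k
        (Polynomial.C A.det⁻¹ * Polynomial.X))) = 1 := by
      rw [RingHom.mapMatrix_apply, diagonal_map (map_zero _), ← diagonal_one]
      congr 1
      ext i
      obtain rfl | hi := eq_or_ne i k <;> simp [*]
    rw [map_mul, mapMatrix_evalRingHom_mapMatrix_C, eval_diagonal, mul_one]

end PolynomialCurves

theorem adjugate_mul_specialLinear_action {ι R : Type*} [Fintype ι] [DecidableEq ι] [CommRing R]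
    (A B : SpecialLinearGroup ι R) (Y Z : Matrix ι ι R) :
    (A.val * Y * (B⁻¹).val).adjugate * (A.val * Z * (B⁻¹).val) =
      B.val * (Y.adjugate * Z) * (B⁻¹).val := by
  have adjugate_inv : (B⁻¹).val.adjugate = B.val :=
    congrArg Subtype.val (inv_inv B)
  have adjugate_mul_self : A.val.adjugate * A.val = 1 := by
    rw [adjugate_mul, A.det_coe, one_smul]
  calc (A.val * Y * (B⁻¹).val).adjugate * (A.val * Z * (B⁻¹).val)
      = B.val * (Y.adjugate * (A.val.adjugate * A.val) * Z) * (B⁻¹).val := by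
        simp only [adjugate_mul_distrib, adjugate_inv, Matrix.mul_assoc]
    _ = B.val * (Y.adjugate * Z) * (B⁻¹).val := by
        rw [adjugate_mul_self, Matrix.mul_one]

variable {K : Type} [Field K] {n m : ℕ}

theorem mem_matrixSemiInvariants {f : MvPolynomial (Fin m × Fin n × Fin n) K} :
    f ∈ matrixSemiInvariants K n m ↔
      ∀ (A B : SpecialLinearGroup (Fin n) K) (Y : Fin m → Matrix (Fin n) (Fin n) K),
        aeval (matCoords fun i => A.val * Y i * (B⁻¹).val) f = aeval (matCoords Y) f := by
  simp only [matrixSemiInvariants, Algebra.mem_iInf, AlgHom.mem_equalizer]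

theorem mem_matrixInvariants {f : MvPolynomial (Fin m × Fin n × Fin n) K} :
    f ∈ matrixInvariants K n m ↔
      ∀ (A : GeneralLinearGroup (Fin n) K) (Y : Fin m → Matrix (Fin n) (Fin n) K),
        aeval (matCoords fun i => A.val * Y i * (A⁻¹).val) f = aeval (matCoords Y) f := by
  simp only [matrixInvariants, Algebra.mem_iInf, AlgHom.mem_equalizer]

section SemiInvariants

variable {f : MvPolynomial (Fin m × Fin n × Fin n) K}

theorem eval_aeval_polynomial_matrix (M : Fin m → Matrix (Fin n) (Fin n) (Polynomial K)) (t : K) :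
    (aeval (fun p => M p.1 p.2.1 p.2.2) f).eval t =
      aeval (matCoords fun i => (Polynomial.evalRingHom t).mapMatrix (M i)) f := by
  rw [← Polynomial.coe_aeval_eq_eval, comp_aeval_apply]
  rfl

theorem aeval_eq_of_forall_aeval_pow_eq [Infinite K] {k : ℕ} (hk : 0 < k)
    {M N : Fin m → Matrix (Fin n) (Fin n) (Polynomial K)}
    (h : ∀ s : K, s ≠ 0 →
      aeval (matCoords fun i => (Polynomial.evalRingHom (s ^ k)).mapMatrix (M i)) f =
        aeval (matCoords fun i => (Polynomial.evalRingHom (s ^ k)).mapMatrix (N i)) f) (t : K) :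
    aeval (matCoords fun i => (Polynomial.evalRingHom t).mapMatrix (M i)) f =
      aeval (matCoords fun i => (Polynomial.evalRingHom t).mapMatrix (N i)) f := by
  simp only [← eval_aeval_polynomial_matrix] at h ⊢
  rw [polynomial_eq_of_forall_eval_pow_eq hk h]

theorem aeval_mul_adjugate_of_det_eq_pow (hf : f ∈ matrixSemiInvariants K n m) (hn : n ≠ 0)
    {M : Matrix (Fin n) (Fin n) K} {s : K} (hs : s ≠ 0) (hM : M.det = s ^ n)
    (Y : Fin m → Matrix (Fin n) (Fin n) K) :
    aeval (matCoords fun i => M * Y i * M.adjugate) f =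
      aeval (matCoords fun i => M.det • Y i) f := by
  let U : SpecialLinearGroup (Fin n) K :=
    ⟨s⁻¹ • M, by rw [det_smul, Fintype.card_fin, hM, ← mul_pow, inv_mul_cancel₀ hs, one_pow]⟩
  have M_eq : M = s • U.val := by simp [U, smul_smul, hs]
  have adjugate_eq : M.adjugate = s ^ (n - 1) • (U⁻¹).val := by
    have inv_val : (U⁻¹).val = U.val.adjugate :=
      Matrix.SpecialLinearGroup.coe_inv U
    rw [M_eq, adjugate_smul, Fintype.card_fin, inv_val]
  rw [← mem_matrixSemiInvariants.mp hf U U fun i => M.det • Y i]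
  congr 3
  funext i
  rw [adjugate_eq, hM, ← mul_pow_sub_one hn s]
  nth_rw 1 [M_eq]
  simp only [smul_mul_assoc, mul_smul_comm, smul_smul]
  rw [mul_comm]

theorem aeval_mul_adjugate [Infinite K] (hf : f ∈ matrixSemiInvariants K n m)
    {A : Matrix (Fin n) (Fin n) K} (hA : A.det ≠ 0) (Y : Fin m → Matrix (Fin n) (Fin n) K) :
    aeval (matCoords fun i => A * Y i * A.adjugate) f =
      aeval (matCoords fun i => A.det • Y i) f := by
  obtain rfl | hn := eq_or_ne n 0
  · exact congrArg (fun Z => aeval (matCoords Z) f) (Subsingleton.elim _ _)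
  have : NeZero n := ⟨hn⟩
  obtain ⟨M, det_M, eval_M⟩ := exists_polynomial_matrix_det_eq_X hA
  have det_eval_M (t : K) : ((Polynomial.evalRingHom t).mapMatrix M).det = t := by
    rw [← RingHom.map_det, det_M, Polynomial.coe_evalRingHom, Polynomial.eval_X]
  have eval_conj (t : K) (i : Fin m) : (Polynomial.evalRingHom t).mapMatrix
      (M * Polynomial.C.mapMatrix (Y i) * M.adjugate) =
        (Polynomial.evalRingHom t).mapMatrix M * Y i *
          ((Polynomial.evalRingHom t).mapMatrix M).adjugate := by
    rw [map_mul, map_mul, mapMatrix_evalRingHom_mapMatrix_C, RingHom.map_adjugate]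
  have eval_smul (t : K) (i : Fin m) : (Polynomial.evalRingHom t).mapMatrix
      ((Polynomial.X : Polynomial K) • Polynomial.C.mapMatrix (Y i)) = t • Y i := by
    ext a b
    simp [mul_comm (Y i a b)]
  have agree_on_curve := aeval_eq_of_forall_aeval_pow_eq (f := f) (Nat.pos_of_ne_zero hn)
    (M := fun i => M * Polynomial.C.mapMatrix (Y i) * M.adjugate)
    (N := fun i => (Polynomial.X : Polynomial K) • Polynomial.C.mapMatrix (Y i)) fun s hs => by
      simp only [eval_conj, eval_smul]
      rw [aeval_mul_adjugate_of_det_eq_pow hf hn hs (det_eval_M _), det_eval_M]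
  simpa only [eval_conj, eval_smul, eval_M] using agree_on_curve A.det

theorem matrixSemiInvariants_le_matrixInvariants [Infinite K] :
    matrixSemiInvariants K n m ≤ matrixInvariants K n m := by
  intro f hf
  rw [mem_matrixInvariants]
  intro A Y
  have det_ne_zero : A.val.det ≠ 0 := A.det.ne_zero
  convert aeval_mul_adjugate hf det_ne_zero fun i => A.val.det⁻¹ • Y i using 4 with i i
  · rw [coe_units_inv, inv_def, Ring.inverse_eq_inv']
    simp only [mul_smul_comm, smul_mul_assoc]
  · simp only [smul_inv_smul₀ det_ne_zero]

end SemiInvariants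

section GenericMatrices

/-- The `i`-th generic matrix, whose entries are the coordinate functions of the `i`-th matrix
of a tuple. -/
noncomputable def genericMatrix (K : Type) [Field K] (n : ℕ) {m : ℕ} (i : Fin m) :
    Matrix (Fin n) (Fin n) (MvPolynomial (Fin m × Fin n × Fin n) K) :=
  Matrix.of fun a b => X (i, a, b)

theorem mapMatrix_aeval_genericMatrix (Y : Fin m → Matrix (Fin n) (Fin n) K) (i : Fin m) :
    (aeval (matCoords Y)).mapMatrix (genericMatrix K n i) = Y i := by
  ext a b
  simp [genericMatrix, matCoords]

theorem mapMatrix_phiStar_genericMatrix_zero :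
    (phiStar K n m).mapMatrix (genericMatrix K n 0) = 1 := by
  ext1 a b
  obtain rfl | hab := eq_or_ne a b <;> simp [genericMatrix, phiStar, *]

theorem mapMatrix_phiStar_genericMatrix_succ (i : Fin m) :
    (phiStar K n m).mapMatrix (genericMatrix K n i.succ) = genericMatrix K n i := by
  ext1 a b
  simp [genericMatrix, phiStar]

theorem aeval_phiStar (Y : Fin m → Matrix (Fin n) (Fin n) K)
    (f : MvPolynomial (Fin (m + 1) × Fin n × Fin n) K) :
    aeval (matCoords Y) (phiStar K n m f) =
      aeval (matCoords (Fin.cons 1 Y : Fin (m + 1) → Matrix (Fin n) (Fin n) K)) f := by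
  rw [phiStar, comp_aeval_apply]
  congr 2
  ext ⟨i, a, b⟩
  cases i using Fin.cases <;> simp [matCoords]

theorem phiStar_mem_matrixInvariants {f : MvPolynomial (Fin (m + 1) × Fin n × Fin n) K}
    (hf : f ∈ matrixInvariants K n (m + 1)) : phiStar K n m f ∈ matrixInvariants K n m := by
  rw [mem_matrixInvariants]
  intro A Y
  rw [aeval_phiStar, aeval_phiStar, ← mem_matrixInvariants.mp hf A (Fin.cons 1 Y)]
  congr 3
  funext i
  cases i using Fin.cases <;> simp

/-- The substitution `g ↦ g(adj(X_0) X_1, …, adj(X_0) X_m)`, a polynomial replacement for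
`g(X_0⁻¹ X_1, …, X_0⁻¹ X_m)`; it is a section of `phiStar`. -/
noncomputable def adjugateLift (K : Type) [Field K] (n m : ℕ) :
    MvPolynomial (Fin m × Fin n × Fin n) K →ₐ[K]
      MvPolynomial (Fin (m + 1) × Fin n × Fin n) K :=
  aeval fun p =>
    ((genericMatrix K n (0 : Fin (m + 1))).adjugate * genericMatrix K n p.1.succ) p.2.1 p.2.2

theorem phiStar_adjugateLift (g : MvPolynomial (Fin m × Fin n × Fin n) K) :
    phiStar K n m (adjugateLift K n m g) = g := by
  have map_lift (i : Fin m) : (phiStar K n m).mapMatrix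
      ((genericMatrix K n 0).adjugate * genericMatrix K n i.succ) = genericMatrix K n i := by
    rw [map_mul, AlgHom.map_adjugate, mapMatrix_phiStar_genericMatrix_zero, adjugate_one, one_mul,
      mapMatrix_phiStar_genericMatrix_succ]
  rw [adjugateLift, comp_aeval_apply]
  convert aeval_X_left_apply g with ⟨i, a, b⟩
  exact congrFun₂ (map_lift i) a b

theorem aeval_adjugateLift (Y : Fin (m + 1) → Matrix (Fin n) (Fin n) K)
    (g : MvPolynomial (Fin m × Fin n × Fin n) K) :
    aeval (matCoords Y) (adjugateLift K n m g) =
      aeval (matCoords fun i : Fin m => (Y 0).adjugate * Y i.succ) g := by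
  have map_lift (i : Fin m) : (aeval (matCoords Y)).mapMatrix
      ((genericMatrix K n 0).adjugate * genericMatrix K n i.succ) =
        (Y 0).adjugate * Y i.succ := by
    rw [map_mul, AlgHom.map_adjugate, mapMatrix_aeval_genericMatrix, mapMatrix_aeval_genericMatrix]
  rw [adjugateLift, comp_aeval_apply]
  congr 2
  ext ⟨i, a, b⟩
  exact congrFun₂ (map_lift i) a b

theorem adjugateLift_mem_matrixSemiInvariants {g : MvPolynomial (Fin m × Fin n × Fin n) K}
    (hg : g ∈ matrixInvariants K n m) :
    adjugateLift K n m g ∈ matrixSemiInvariants K n (m + 1) := by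
  rw [mem_matrixSemiInvariants]
  intro A B Y
  simp only [aeval_adjugateLift, adjugate_mul_specialLinear_action]
  exact mem_matrixInvariants.mp hg (B : GeneralLinearGroup (Fin n) K) _

end GenericMatrices

theorem stmt_16_general (K : Type) [Field K] [Infinite K] (n m : ℕ) :
    (∀ f ∈ matrixSemiInvariants K n (m + 1), phiStar K n m f ∈ matrixInvariants K n m) ∧
      ∀ g ∈ matrixInvariants K n m,
        ∃ f ∈ matrixSemiInvariants K n (m + 1), phiStar K n m f = g :=
  ⟨fun _ hf => phiStar_mem_matrixInvariants (matrixSemiInvariants_le_matrixInvariants hf),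
    fun g hg => ⟨adjugateLift K n m g, adjugateLift_mem_matrixSemiInvariants hg,
      phiStar_adjugateLift g⟩⟩

/-- **Domokos.** `φ*` restricts to a surjective ring homomorphism from
`R(n,m+1)` onto `S(n,m)`. -/
theorem stmt_16 (K : Type) [Field K] [IsAlgClosed K] (n m : ℕ) (hn : 0 < n) (hm : 0 < m) :
    (∀ f ∈ matrixSemiInvariants K n (m + 1), phiStar K n m f ∈ matrixInvariants K n m) ∧
      ∀ g ∈ matrixInvariants K n m,
        ∃ f ∈ matrixSemiInvariants K n (m + 1), phiStar K n m f = g := by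
  exact stmt_16_general K n m
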